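/- Let f : D → ℝ⁴ be a branched disc of order N at 0. Then there exist δ ∈ (0,1) and ε₀ > 0 such that for every ε ∈ (0, ε₀) there is a function r_ε : ℝ → (0, δ], 2π-periodic and of class C¹, such that for all θ ∈ ℝ and all r ∈ (0, δ]: ‖f(r e^{iθ})‖ = ε if and only if r = r_ε(θ). Consequently, the intersection of the image f({z : 0 < |z| ≤ δ}) with the sphere S(0,ε) ⊂ ℝ⁴ of radius ε centered at 0 is exactly the closed curve θ ↦ f(r_ε(θ) e^{iθ}). -/

import Mathlib

open Complex Filter Asymptotics Metric Topology

/-- `f : ℂ → ℝ⁴` (defined on the open unit disc) is a *branched disc of order `N` at `0`*: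
`f` is `C¹` on the unit disc, `f 0 = 0`, and as `z → 0`,
`f¹(z) = Re(z^N) + o(|z|^N)`, `f²(z) = Im(z^N) + o(|z|^N)`, `f³, f⁴ = o(|z|^N)`,
with the first-order derivatives of the corresponding differences being `o(|z|^{N-1})`. -/
structure IsBranchedDisc (f : ℂ → EuclideanSpace ℝ (Fin 4)) (N : ℕ) : Prop where
  two_le : 2 ≤ N
  contDiffOn : ContDiffOn ℝ 1 f (ball (0 : ℂ) 1)
  map_zero : f 0 = 0
  comp1 : (fun z : ℂ => f z 0 - (z ^ N).re) =o[𝓝 (0 : ℂ)] fun z => ‖z‖ ^ N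
  comp2 : (fun z : ℂ => f z 1 - (z ^ N).im) =o[𝓝 (0 : ℂ)] fun z => ‖z‖ ^ N
  comp3 : (fun z : ℂ => f z 2) =o[𝓝 (0 : ℂ)] fun z => ‖z‖ ^ N
  comp4 : (fun z : ℂ => f z 3) =o[𝓝 (0 : ℂ)] fun z => ‖z‖ ^ N
  deriv1 : (fun z : ℂ => fderiv ℝ (fun w : ℂ => f w 0 - (w ^ N).re) z)
      =o[𝓝 (0 : ℂ)] fun z => ‖z‖ ^ (N - 1)
  deriv2 : (fun z : ℂ => fderiv ℝ (fun w : ℂ => f w 1 - (w ^ N).im) z)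
      =o[𝓝 (0 : ℂ)] fun z => ‖z‖ ^ (N - 1)
  deriv3 : (fun z : ℂ => fderiv ℝ (fun w : ℂ => f w 2) z)
      =o[𝓝 (0 : ℂ)] fun z => ‖z‖ ^ (N - 1)
  deriv4 : (fun z : ℂ => fderiv ℝ (fun w : ℂ => f w 3) z)
      =o[𝓝 (0 : ℂ)] fun z => ‖z‖ ^ (N - 1)

/-!
To leading order `f z` is `p z = (z ^ N, 0)` and, by Euler's identity for the homogeneous map `p`,
the radial derivative `Df(z) z` is `N • p z`. Hence `⟪f z, Df(z) z⟫ ∼ N ‖z‖ ^ (2 * N)` is positive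
near `0`: the function `‖f‖ ^ 2` increases strictly along rays, so a ray meets each of its low
levels exactly once, and by the implicit function theorem the crossing radius is as smooth as `f`.
-/

open Set
open scoped RealInnerProductSpace ContDiff

section ImplicitGraph

variable {𝕜 E₁ E₂ F : Type*} [RCLike 𝕜]
  [NormedAddCommGroup E₁] [NormedSpace 𝕜 E₁] [CompleteSpace E₁]
  [NormedAddCommGroup E₂] [NormedSpace 𝕜 E₂] [CompleteSpace E₂]
  [NormedAddCommGroup F] [NormedSpace 𝕜 F] [CompleteSpace F]

theorem contDiffAt_of_eventually_level_subset_graph {n : ℕ∞ω} {H : E₁ × E₂ → F} {ρ : E₁ → E₂}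
    {x : E₁} (hn : n ≠ 0) (hH : ContDiffAt 𝕜 n H (x, ρ x))
    (hinv : (fderiv 𝕜 H (x, ρ x) ∘L .inr 𝕜 E₁ E₂).IsInvertible)
    (hgraph : ∀ᶠ q in 𝓝 (x, ρ x), H q = H (x, ρ x) → q.2 = ρ q.1) :
    ContDiffAt 𝕜 n ρ x := by
  have hsmooth : ContDiffAt 𝕜 n (hH.implicitFunction hn hinv) x :=
    hH.contDiffAt_implicitFunction hn hinv
  have htendsto : Tendsto (fun y ↦ (y, hH.implicitFunction hn hinv y)) (𝓝 x) (𝓝 (x, ρ x)) := by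
    have hself : hH.implicitFunction hn hinv x = ρ x := hH.implicitFunction_apply_self hn hinv
    exact tendsto_id.prodMk_nhds (by simpa only [hself] using hsmooth.continuousAt.tendsto)
  refine hsmooth.congr_of_eventuallyEq ?_
  filter_upwards [htendsto.eventually hgraph, hH.eventually_apply_implicitFunction hn hinv]
    with y hy hlevel
  exact (hy hlevel).symm

end ImplicitGraph

section RadialDerivative

variable {𝕜 E F : Type*} [NontriviallyNormedField 𝕜]
  [NormedAddCommGroup E] [NormedSpace 𝕜 E] [NormedAddCommGroup F] [NormedSpace 𝕜 F]

theorem differentiableAt_of_fderiv_apply_ne_zero {f : E → F} {x v : E}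
    (h : fderiv 𝕜 f x v ≠ 0) : DifferentiableAt 𝕜 f x := by
  by_contra hf
  simp [fderiv_zero_of_not_differentiableAt hf] at h

theorem deriv_comp_smul {f : E → F} {r : 𝕜} {x : E} (hf : DifferentiableAt 𝕜 f (r • x)) :
    deriv (fun s : 𝕜 ↦ f (s • x)) r = fderiv 𝕜 f (r • x) x := by
  have hray : HasDerivAt (fun s : 𝕜 ↦ s • x) x r := by
    simpa only [one_smul, id] using (hasDerivAt_id r).smul_const x
  exact (hf.hasFDerivAt.comp_hasDerivAt r hray).deriv

theorem fderiv_apply_self_of_homogeneous {p : E → F} {N : ℕ} {x : E}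
    (hp : DifferentiableAt 𝕜 p x) (hhom : ∀ r : 𝕜, p (r • x) = r ^ N • p x) :
    fderiv 𝕜 p x x = (N : 𝕜) • p x := by
  have hone : DifferentiableAt 𝕜 p ((1 : 𝕜) • x) := by rwa [one_smul]
  calc fderiv 𝕜 p x x = deriv (fun r : 𝕜 ↦ p (r • x)) 1 := by
        rw [deriv_comp_smul hone, one_smul]
    _ = deriv (fun r : 𝕜 ↦ r ^ N • p x) 1 := by simp only [hhom]
    _ = (N : 𝕜) • p x := by
        simpa using ((hasDerivAt_pow N (1 : 𝕜)).smul_const (p x)).deriv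

theorem isLittleO_apply_self {l : Filter E} {L : E → E →L[𝕜] F} {g : E → ℝ}
    (hL : L =o[l] g) : (fun x ↦ L x x) =o[l] fun x ↦ g x * ‖x‖ :=
  (isBigO_of_le l fun x ↦ by
    simpa only [norm_mul, norm_norm] using (L x).le_opNorm x).trans_isLittleO
    (hL.norm_left.mul_isBigO (isBigO_refl (fun x : E ↦ ‖x‖) l))

end RadialDerivative

section RadialFunction

variable {E : Type*} [NormedAddCommGroup E] [NormedSpace ℝ E]

/-- `ρ` is the radial function of the set `S` in the closed ball of radius `δ` about `0`: along the
ray through `x ≠ 0`, the punctured ball meets `S` exactly at `ρ x • x`, which lies in the open ball.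
The point `x` need not be a unit vector, so the radii range over `(0, δ / ‖x‖]`. -/
structure IsRadialFunction (S : Set E) (δ : ℝ) (ρ : E → ℝ) : Prop where
  mem_Ioo : ∀ {x}, x ≠ 0 → ρ x ∈ Ioo 0 (δ / ‖x‖)
  smul_mem_iff : ∀ {x}, x ≠ 0 → ∀ r ∈ Ioc 0 (δ / ‖x‖), (r • x ∈ S ↔ r = ρ x)

variable {G : E → ℝ} {δ c : ℝ}

theorem norm_smul_le_of_mem_Icc {x : E} (hx : x ≠ 0) {r : ℝ} (hr : r ∈ Icc 0 (δ / ‖x‖)) :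
    ‖r • x‖ ≤ δ := by
  rw [norm_smul, Real.norm_of_nonneg hr.1]
  exact (le_div_iff₀ (norm_pos_iff.2 hx)).1 hr.2

theorem continuousOn_closedBall_of_fderiv_apply_self_pos (hG : ContinuousAt G 0)
    (hpos : ∀ x ≠ 0, ‖x‖ ≤ δ → 0 < fderiv ℝ G x x) : ContinuousOn G (closedBall 0 δ) := by
  intro x hx
  rcases eq_or_ne x 0 with rfl | hx0
  · exact hG.continuousWithinAt
  · exact (differentiableAt_of_fderiv_apply_ne_zero
      (hpos x hx0 (mem_closedBall_zero_iff.1 hx)).ne').continuousAt.continuousWithinAt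

theorem continuousOn_ray (hG : ContinuousAt G 0)
    (hpos : ∀ x ≠ 0, ‖x‖ ≤ δ → 0 < fderiv ℝ G x x) {x : E} (hx : x ≠ 0) :
    ContinuousOn (fun r : ℝ ↦ G (r • x)) (Icc 0 (δ / ‖x‖)) :=
  (continuousOn_closedBall_of_fderiv_apply_self_pos hG hpos).comp (by fun_prop)
    fun _ hr ↦ mem_closedBall_zero_iff.2 (norm_smul_le_of_mem_Icc hx hr)

theorem fderiv_smul_apply_pos (hpos : ∀ x ≠ 0, ‖x‖ ≤ δ → 0 < fderiv ℝ G x x) {x : E}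
    (hx : x ≠ 0) {r : ℝ} (hr : r ∈ Ioc 0 (δ / ‖x‖)) : 0 < fderiv ℝ G (r • x) x := by
  have h := hpos (r • x) (smul_ne_zero hr.1.ne' hx)
    (norm_smul_le_of_mem_Icc hx (Ioc_subset_Icc_self hr))
  rw [map_smul, smul_eq_mul] at h
  exact pos_of_mul_pos_right h hr.1.le

theorem strictMonoOn_ray (hG : ContinuousAt G 0)
    (hpos : ∀ x ≠ 0, ‖x‖ ≤ δ → 0 < fderiv ℝ G x x) {x : E} (hx : x ≠ 0) :
    StrictMonoOn (fun r : ℝ ↦ G (r • x)) (Icc 0 (δ / ‖x‖)) := by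
  refine strictMonoOn_of_deriv_pos (convex_Icc _ _) (continuousOn_ray hG hpos hx) fun r hr ↦ ?_
  rw [interior_Icc] at hr
  have hderiv := fderiv_smul_apply_pos hpos hx (Ioo_subset_Ioc_self hr)
  rwa [deriv_comp_smul (differentiableAt_of_fderiv_apply_ne_zero hderiv.ne')]

theorem exists_isRadialFunction_level (hδ : 0 < δ) (hG : ContinuousAt G 0)
    (hpos : ∀ x ≠ 0, ‖x‖ ≤ δ → 0 < fderiv ℝ G x x) (hc₀ : G 0 < c)
    (hc : ∀ x ∈ sphere (0 : E) δ, c < G x) :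
    ∃ ρ, IsRadialFunction {x | G x = c} δ ρ := by
  have hcross : ∀ x : E, ∃ r, x ≠ 0 → r ∈ Ioo 0 (δ / ‖x‖) ∧ G (r • x) = c := by
    intro x
    rcases eq_or_ne x 0 with rfl | hx
    · exact ⟨0, fun h ↦ absurd rfl h⟩
    have hend : (δ / ‖x‖) • x ∈ sphere (0 : E) δ := by
      rw [mem_sphere_zero_iff_norm, norm_smul, Real.norm_of_nonneg (by positivity),
        div_mul_cancel₀ _ (norm_ne_zero_iff.2 hx)]
    obtain ⟨r, hr, hGr⟩ := intermediate_value_Ioo (by positivity) (continuousOn_ray hG hpos hx)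
      ⟨by simpa only [zero_smul] using hc₀, hc _ hend⟩
    exact ⟨r, fun _ ↦ ⟨hr, hGr⟩⟩
  choose ρ hρ using hcross
  refine ⟨ρ, fun hx ↦ (hρ _ hx).1, fun {x} hx r hr ↦ ⟨fun h ↦ ?_, ?_⟩⟩
  · exact (strictMonoOn_ray hG hpos hx).injOn (Ioc_subset_Icc_self hr)
      (Ioo_subset_Icc_self (hρ x hx).1) (h.trans (hρ x hx).2.symm)
  · rintro rfl
    exact (hρ x hx).2

namespace IsRadialFunction

variable {S : Set E} {ρ : E → ℝ}

theorem smul_mem (hρ : IsRadialFunction S δ ρ) {x : E} (hx : x ≠ 0) : ρ x • x ∈ S :=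
  (hρ.smul_mem_iff hx _ (Ioo_subset_Ioc_self (hρ.mem_Ioo hx))).2 rfl

theorem eventually_smul_mem_imp_eq (hρ : IsRadialFunction S δ ρ) {x : E} (hx : x ≠ 0) :
    ∀ᶠ q : E × ℝ in 𝓝 (x, ρ x), q.2 • q.1 ∈ S → q.2 = ρ q.1 := by
  have hne : ∀ᶠ q : E × ℝ in 𝓝 (x, ρ x), q.1 ≠ 0 := continuousAt_fst.eventually_ne hx
  have hpos : ∀ᶠ q : E × ℝ in 𝓝 (x, ρ x), 0 < q.2 :=
    continuousAt_snd.eventually_const_lt (hρ.mem_Ioo hx).1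
  have hlt : ∀ᶠ q : E × ℝ in 𝓝 (x, ρ x), q.2 < δ / ‖q.1‖ :=
    continuousAt_snd.eventually_lt
      (continuousAt_const.div continuousAt_fst.norm (norm_ne_zero_iff.2 hx)) (hρ.mem_Ioo hx).2
  filter_upwards [hne, hpos, hlt] with q hq0 hq1 hq2 hqS
  exact (hρ.smul_mem_iff hq0 _ ⟨hq1, hq2.le⟩).1 hqS

theorem contDiffAt [CompleteSpace E] {n : ℕ∞ω} (hρ : IsRadialFunction {x | G x = c} δ ρ)
    (hn : n ≠ 0) (hpos : ∀ x ≠ 0, ‖x‖ ≤ δ → 0 < fderiv ℝ G x x)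
    (hG : ∀ x ≠ 0, ‖x‖ ≤ δ → ContDiffAt ℝ n G x) {x : E} (hx : x ≠ 0) :
    ContDiffAt ℝ n ρ x := by
  have hr : ρ x ∈ Ioc 0 (δ / ‖x‖) := Ioo_subset_Ioc_self (hρ.mem_Ioo hx)
  have hGx : ContDiffAt ℝ n G (ρ x • x) := hG _ (smul_ne_zero hr.1.ne' hx)
    (norm_smul_le_of_mem_Icc hx (Ioc_subset_Icc_self hr))
  have hH : ContDiffAt ℝ n (fun q : E × ℝ ↦ G (q.2 • q.1)) (x, ρ x) :=
    ContDiffAt.comp (x, ρ x) hGx (contDiffAt_snd.smul contDiffAt_fst)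
  have hpartial : fderiv ℝ (fun q : E × ℝ ↦ G (q.2 • q.1)) (x, ρ x) (0, 1)
      = fderiv ℝ G (ρ x • x) x := by
    have hslice : HasDerivAt (fun r : ℝ ↦ (x, r)) ((0 : E), (1 : ℝ)) (ρ x) :=
      (hasDerivAt_const _ _).prodMk (hasDerivAt_id _)
    rw [← deriv_comp_smul (hGx.differentiableAt hn)]
    exact ((hH.differentiableAt hn).hasFDerivAt.comp_hasDerivAt (ρ x) hslice).deriv.symm
  have hne : fderiv ℝ G (ρ x • x) x ≠ 0 := (fderiv_smul_apply_pos hpos hx hr).ne'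
  refine contDiffAt_of_eventually_level_subset_graph hn hH
    ⟨ContinuousLinearEquiv.unitsEquivAut ℝ (Units.mk0 _ hne), ?_⟩ ?_
  · ext
    simp [hpartial]
  · filter_upwards [hρ.eventually_smul_mem_imp_eq hx] with q hq hlevel
    exact hq (hlevel.trans (hρ.smul_mem hx))

theorem punctured_closedBall_inter_eq_range {S : Set ℂ} {ρ : ℂ → ℝ}
    (hρ : IsRadialFunction S δ ρ) :
    {z : ℂ | 0 < ‖z‖ ∧ ‖z‖ ≤ δ} ∩ S
      = range fun θ : ℝ ↦ (ρ (exp (θ * I)) : ℂ) * exp (θ * I) := by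
  ext z
  constructor
  · rintro ⟨⟨hz0, hzδ⟩, hzS⟩
    have hpolar : ‖z‖ • exp (z.arg * I) = z := by
      rw [real_smul, norm_mul_exp_arg_mul_I]
    have hr : ‖z‖ = ρ (exp (z.arg * I)) := by
      refine (hρ.smul_mem_iff (exp_ne_zero _) _ ⟨hz0, ?_⟩).1 (hpolar.symm ▸ hzS)
      rwa [norm_exp_ofReal_mul_I, div_one]
    exact ⟨z.arg, by simp only [← hr, norm_mul_exp_arg_mul_I]⟩
  · rintro ⟨θ, rfl⟩
    have hmem := hρ.mem_Ioo (exp_ne_zero (θ * I))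
    rw [norm_exp_ofReal_mul_I, div_one] at hmem
    have hnorm : ‖(ρ (exp (θ * I)) : ℂ) * exp (θ * I)‖ = ρ (exp (θ * I)) := by
      rw [norm_mul, norm_exp_ofReal_mul_I, mul_one, norm_real, Real.norm_of_nonneg hmem.1.le]
    refine ⟨?_, hρ.smul_mem (exp_ne_zero _)⟩
    simpa only [mem_ofPred_eq, hnorm] using And.intro hmem.1 hmem.2.le

end IsRadialFunction

theorem eventually_exists_isRadialFunction_level [ProperSpace E] {n : ℕ∞ω} (hn : n ≠ 0)
    (hG : ContinuousAt G 0) (hdiff : ∀ᶠ x in 𝓝[≠] 0, ContDiffAt ℝ n G x)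
    (hpos : ∀ᶠ x in 𝓝[≠] 0, 0 < fderiv ℝ G x x) :
    ∀ᶠ δ in 𝓝[>] (0 : ℝ), ∃ c₀ > G 0, ∀ c, G 0 < c → c < c₀ →
      ∃ ρ, IsRadialFunction {x | G x = c} δ ρ ∧ ContDiffOn ℝ n ρ {0}ᶜ := by
  obtain ⟨η, hη, hball⟩ := Metric.eventually_nhds_iff.1
    (eventually_nhdsWithin_iff.1 (hdiff.and hpos))
  filter_upwards [Ioo_mem_nhdsGT hη] with δ ⟨hδ, hδη⟩
  have hgood : ∀ x ≠ 0, ‖x‖ ≤ δ → ContDiffAt ℝ n G x ∧ 0 < fderiv ℝ G x x :=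
    fun x hx hxδ ↦ hball (by rw [dist_zero_right]; exact hxδ.trans_lt hδη) hx
  have hposδ : ∀ x ≠ 0, ‖x‖ ≤ δ → 0 < fderiv ℝ G x x := fun x hx hxδ ↦ (hgood x hx hxδ).2
  have hsphere : ∀ x ∈ sphere (0 : E) δ, G 0 < G x := by
    intro x hx
    rw [mem_sphere_zero_iff_norm] at hx
    have hx0 : x ≠ 0 := norm_pos_iff.1 (hx ▸ hδ)
    have hmono := strictMonoOn_ray hG hposδ hx0
    rw [hx, div_self hδ.ne'] at hmono
    simpa only [zero_smul, one_smul] using hmono (left_mem_Icc.2 zero_le_one)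
      (right_mem_Icc.2 zero_le_one) zero_lt_one
  obtain ⟨c₀, hc₀, hmin⟩ := (isCompact_sphere (0 : E) δ).exists_forall_le'
    ((continuousOn_closedBall_of_fderiv_apply_self_pos hG hposδ).mono sphere_subset_closedBall)
    hsphere
  refine ⟨c₀, hc₀, fun c hc hcc₀ ↦ ?_⟩
  obtain ⟨ρ, hρ⟩ := exists_isRadialFunction_level hδ hG hposδ hc
    fun x hx ↦ hcc₀.trans_le (hmin x hx)
  exact ⟨ρ, hρ, fun x hx ↦ (hρ.contDiffAt hn hposδ (fun y hy hyδ ↦ (hgood y hy hyδ).1)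
    hx).contDiffWithinAt⟩

end RadialFunction

section InnerProductSpace

variable {E F : Type*} [NormedAddCommGroup E] [NormedSpace ℝ E]
  [NormedAddCommGroup F] [InnerProductSpace ℝ F]

theorem eventually_exists_isRadialFunction_sphere [ProperSpace E] {n : ℕ∞ω} {f : E → F}
    (hn : n ≠ 0) (hf₀ : f 0 = 0) (hf : ContinuousAt f 0)
    (hdiff : ∀ᶠ x in 𝓝[≠] 0, ContDiffAt ℝ n f x)
    (hpos : ∀ᶠ x in 𝓝[≠] 0, 0 < ⟪f x, fderiv ℝ f x x⟫) :
    ∀ᶠ δ in 𝓝[>] (0 : ℝ), ∃ ε₀ > 0, ∀ ε, 0 < ε → ε < ε₀ →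
      ∃ ρ, IsRadialFunction (f ⁻¹' sphere 0 ε) δ ρ ∧ ContDiffOn ℝ n ρ {0}ᶜ := by
  have hposG : ∀ᶠ x in 𝓝[≠] 0, 0 < fderiv ℝ (fun y ↦ ‖f y‖ ^ 2) x x := by
    filter_upwards [hdiff, hpos] with x hx hxpos
    rw [(hx.differentiableAt hn).hasFDerivAt.norm_sq.fderiv]
    simpa using hxpos
  filter_upwards [eventually_exists_isRadialFunction_level (G := fun x ↦ ‖f x‖ ^ 2) hn
    (hf.norm.pow 2) (hdiff.mono fun x hx ↦ hx.norm_sq ℝ) hposG] with δ ⟨c₀, hc₀, hlevel⟩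
  simp only [hf₀, norm_zero, ne_eq, OfNat.ofNat_ne_zero, not_false_eq_true, zero_pow]
    at hc₀ hlevel
  refine ⟨√c₀, Real.sqrt_pos.2 hc₀, fun ε hε hεc₀ ↦ ?_⟩
  have hpre : f ⁻¹' sphere 0 ε = {x | ‖f x‖ ^ 2 = ε ^ 2} := by
    ext x
    simp only [mem_preimage, mem_sphere_zero_iff_norm, mem_ofPred_eq,
      sq_eq_sq₀ (norm_nonneg _) hε.le]
  rw [hpre]
  exact hlevel (ε ^ 2) (by positivity) ((Real.lt_sqrt hε.le).1 hεc₀)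

theorem isEquivalent_inner {α : Type*} {l : Filter α} {u v p : α → F} (hu : u ~[l] p)
    (hv : v ~[l] p) : (fun a ↦ ⟪u a, v a⟫) ~[l] fun a ↦ ‖p a‖ ^ 2 := by
  have hinner : ∀ s t : α → F, (fun a ↦ ⟪s a, t a⟫) =O[l] fun a ↦ ‖s a‖ * ‖t a‖ := fun s t ↦
    isBigO_of_le l fun a ↦ by
      simpa only [norm_mul, norm_norm] using norm_inner_le_norm (𝕜 := ℝ) (s a) (t a)
  have hsplit : ∀ a, ⟪u a, v a⟫ - ‖p a‖ ^ 2 = ⟪u a - p a, v a⟫ + ⟪p a, v a - p a⟫ := fun a ↦ by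
    rw [inner_sub_left, inner_sub_right, real_inner_self_eq_norm_sq]
    ring
  have hleft : (fun a ↦ ⟪u a - p a, v a⟫) =o[l] fun a ↦ ‖p a‖ ^ 2 := by
    simp only [sq]
    exact (hinner _ _).trans_isLittleO (hu.isLittleO.norm_norm.mul_isBigO hv.isBigO.norm_norm)
  have hright : (fun a ↦ ⟪p a, v a - p a⟫) =o[l] fun a ↦ ‖p a‖ ^ 2 := by
    simp only [sq]
    exact (hinner _ _).trans_isLittleO ((isBigO_refl p l).norm_norm.mul_isLittleO
      hv.isLittleO.norm_norm)
  exact (hleft.add hright).congr_left fun a ↦ (hsplit a).symm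

theorem eventually_inner_pos {α : Type*} {l : Filter α} {u v p : α → F} {k : ℝ} (hk : 0 < k)
    (hu : u ~[l] p) (hv : v ~[l] fun a ↦ k • p a) (hp : ∀ᶠ a in l, p a ≠ 0) :
    ∀ᶠ a in l, 0 < ⟪u a, v a⟫ := by
  have hv' : (fun a ↦ k⁻¹ • v a) ~[l] p := by
    simpa only [inv_smul_smul₀ hk.ne'] using (IsEquivalent.refl (u := fun _ ↦ k⁻¹)).smul hv
  filter_upwards [(isEquivalent_inner hu hv').eventually_pos
    (hp.mono fun a ha ↦ pow_pos (norm_pos_iff.2 ha) 2)] with a ha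
  rw [inner_smul_right] at ha
  exact pos_of_mul_pos_right ha (inv_nonneg.2 hk.le)

end InnerProductSpace

theorem fderiv_euclidean_apply {E ι : Type*} [NormedAddCommGroup E] [NormedSpace ℝ E] [Finite ι]
    {f : E → EuclideanSpace ℝ ι} {x : E} (hf : DifferentiableAt ℝ f x) (i : ι) (v : E) :
    fderiv ℝ (fun y ↦ f y i) x v = fderiv ℝ f x v i := by
  have := Fintype.ofFinite ι
  have hcomp := (EuclideanSpace.proj (𝕜 := ℝ) i).hasFDerivAt.comp x hf.hasFDerivAt
  exact DFunLike.congr_fun hcomp.fderiv v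

theorem isLittleO_euclidean {α ι G : Type*} [Fintype ι] [SeminormedAddCommGroup G]
    {l : Filter α} {u : α → EuclideanSpace ℝ ι} {g : α → G} :
    u =o[l] g ↔ ∀ i, (fun a ↦ u a i) =o[l] g := by
  rw [← isLittleO_pi]
  exact ⟨((EuclideanSpace.equiv ι ℝ).isBigO_comp u l).trans_isLittleO,
    ((EuclideanSpace.equiv ι ℝ).isBigO_comp_rev u l).trans_isLittleO⟩

/-- The model `z ↦ (z ^ N, 0)` of a branched disc of order `N`, in real coordinates on `ℂ × ℂ`. -/
noncomputable def branchModel (N : ℕ) (z : ℂ) : EuclideanSpace ℝ (Fin 4) :=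
  !₂[(z ^ N).re, (z ^ N).im, 0, 0]

theorem norm_branchModel (N : ℕ) (z : ℂ) : ‖branchModel N z‖ = ‖z‖ ^ N := by
  rw [← norm_pow, EuclideanSpace.norm_eq, norm_eq_sqrt_sq_add_sq]
  simp [branchModel, Fin.sum_univ_four]

theorem branchModel_smul (N : ℕ) (r : ℝ) (z : ℂ) :
    branchModel N (r • z) = r ^ N • branchModel N z := by
  ext i
  fin_cases i <;> simp [branchModel, mul_pow, ← ofReal_pow]

theorem differentiable_branchModel (N : ℕ) : Differentiable ℝ (branchModel N) := by
  have hpow : Differentiable ℝ fun z : ℂ ↦ z ^ N := by fun_prop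
  refine differentiable_euclidean.2 fun i ↦ ?_
  fin_cases i
  · exact reCLM.differentiable.comp hpow
  · exact imCLM.differentiable.comp hpow
  · exact differentiable_const (0 : ℝ)
  · exact differentiable_const (0 : ℝ)

namespace IsBranchedDisc

variable {f : ℂ → EuclideanSpace ℝ (Fin 4)} {N : ℕ}

theorem contDiffAt_zero (hf : IsBranchedDisc f N) : ContDiffAt ℝ 1 f 0 :=
  hf.contDiffOn.contDiffAt (ball_mem_nhds _ one_pos)

theorem sub_branchModel_apply_isLittleO (hf : IsBranchedDisc f N) (i : Fin 4) :
    (fun z ↦ f z i - branchModel N z i) =o[𝓝 0] fun z ↦ ‖z‖ ^ N := by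
  fin_cases i
  · simpa [branchModel] using hf.comp1
  · simpa [branchModel] using hf.comp2
  · simpa [branchModel] using hf.comp3
  · simpa [branchModel] using hf.comp4

theorem fderiv_sub_branchModel_apply_isLittleO (hf : IsBranchedDisc f N) (i : Fin 4) :
    (fun z ↦ fderiv ℝ (fun w ↦ f w i - branchModel N w i) z) =o[𝓝 0]
      fun z ↦ ‖z‖ ^ (N - 1) := by
  fin_cases i
  · simpa [branchModel] using hf.deriv1
  · simpa [branchModel] using hf.deriv2
  · simpa [branchModel] using hf.deriv3
  · simpa [branchModel] using hf.deriv4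

theorem isEquivalent_branchModel (hf : IsBranchedDisc f N) : f ~[𝓝 0] branchModel N := by
  refine IsLittleO.of_norm_right ?_
  simp only [norm_branchModel]
  exact isLittleO_euclidean.2 hf.sub_branchModel_apply_isLittleO

theorem fderiv_apply_self_isEquivalent (hf : IsBranchedDisc f N) :
    (fun z ↦ fderiv ℝ f z z) ~[𝓝 0] fun z ↦ (N : ℝ) • branchModel N z := by
  have hN : N ≠ 0 := (two_pos.trans_le hf.two_le).ne'
  have hdiff : ∀ᶠ z in 𝓝 (0 : ℂ), DifferentiableAt ℝ f z :=
    (hf.contDiffAt_zero.eventually (by simp)).mono fun z hz ↦ hz.differentiableAt one_ne_zero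
  have hcomponent : ∀ i, (fun z ↦ (fderiv ℝ f z z - (N : ℝ) • branchModel N z) i) =o[𝓝 0]
      fun z ↦ ‖z‖ ^ N := by
    intro i
    have hsub := isLittleO_apply_self (hf.fderiv_sub_branchModel_apply_isLittleO i)
    simp only [pow_sub_one_mul hN] at hsub
    refine hsub.congr' ?_ EventuallyEq.rfl
    filter_upwards [hdiff] with z hz
    have hp := (differentiable_branchModel N).differentiableAt (x := z)
    rw [← fderiv_apply_self_of_homogeneous hp (branchModel_smul N · z), ← sub_apply,
      ← fderiv_sub hz hp, ← fderiv_euclidean_apply (hz.sub hp)]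
    rfl
  refine (isLittleO_const_smul_right (Nat.cast_ne_zero.2 hN)).2 (IsLittleO.of_norm_right ?_)
  simp only [norm_branchModel]
  exact isLittleO_euclidean.2 hcomponent

theorem eventually_inner_fderiv_apply_self_pos (hf : IsBranchedDisc f N) :
    ∀ᶠ z in 𝓝[≠] 0, 0 < ⟪f z, fderiv ℝ f z z⟫ := by
  have hN : (0 : ℝ) < N := by exact_mod_cast two_pos.trans_le hf.two_le
  refine eventually_inner_pos hN (hf.isEquivalent_branchModel.mono nhdsWithin_le_nhds)
    (hf.fderiv_apply_self_isEquivalent.mono nhdsWithin_le_nhds) ?_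
  filter_upwards [self_mem_nhdsWithin] with z hz
  rw [← norm_ne_zero_iff, norm_branchModel]
  exact pow_ne_zero N (norm_ne_zero_iff.2 hz)

end IsBranchedDisc

theorem branchedDisc_sphere_intersection_general {F : Type*} [NormedAddCommGroup F]
    [InnerProductSpace ℝ F] {n : ℕ∞ω} {f : ℂ → F} (hn : n ≠ 0) (hf₀ : f 0 = 0)
    (hf : ContinuousAt f 0) (hdiff : ∀ᶠ z in 𝓝[≠] 0, ContDiffAt ℝ n f z)
    (hpos : ∀ᶠ z in 𝓝[≠] 0, 0 < ⟪f z, fderiv ℝ f z z⟫) :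
    ∃ δ : ℝ, 0 < δ ∧ δ < 1 ∧ ∃ ε₀ : ℝ, 0 < ε₀ ∧
      ∀ ε : ℝ, 0 < ε → ε < ε₀ →
        ∃ rε : ℝ → ℝ,
          (∀ θ : ℝ, rε θ ∈ Ioc 0 δ) ∧
          Function.Periodic rε (2 * Real.pi) ∧
          ContDiff ℝ n rε ∧
          (∀ θ : ℝ, ∀ r : ℝ, r ∈ Ioc 0 δ → (‖f ((r : ℂ) * exp (θ * I))‖ = ε ↔ r = rε θ)) ∧
          (f '' {z : ℂ | 0 < ‖z‖ ∧ ‖z‖ ≤ δ}) ∩ sphere (0 : F) ε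
            = range (fun θ : ℝ ↦ f ((rε θ : ℂ) * exp (θ * I))) := by
  obtain ⟨δ, ⟨ε₀, hε₀, hradial⟩, hδ, hδ1⟩ :=
    ((eventually_exists_isRadialFunction_sphere hn hf₀ hf hdiff hpos).and
      (Ioo_mem_nhdsGT one_pos)).exists
  refine ⟨δ, hδ, hδ1, ε₀, hε₀, fun ε hε hεε₀ ↦ ?_⟩
  obtain ⟨ρ, hρ, hsmooth⟩ := hradial ε hε hεε₀
  have hunit : ∀ θ : ℝ, δ / ‖exp (θ * I)‖ = δ := fun θ ↦ by
    rw [norm_exp_ofReal_mul_I, div_one]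
  have hcircle : ContDiff ℝ n fun θ : ℝ ↦ exp (θ * I) :=
    (ofRealCLM.contDiff.mul contDiff_const).cexp
  refine ⟨fun θ ↦ ρ (exp (θ * I)), fun θ ↦ ?_, fun θ ↦ ?_, ?_, fun θ r hr ↦ ?_, ?_⟩
  · simpa only [hunit] using Ioo_subset_Ioc_self (hρ.mem_Ioo (exp_ne_zero (θ * I)))
  · simp [add_mul, exp_periodic _]
  · exact hsmooth.comp_contDiff hcircle fun θ ↦ exp_ne_zero _
  · rw [← hρ.smul_mem_iff (exp_ne_zero (θ * I)) r (by rwa [hunit]), mem_preimage,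
      mem_sphere_zero_iff_norm, real_smul]
  · rw [← image_inter_preimage, hρ.punctured_closedBall_inter_eq_range, ← range_comp]
    rfl

/-- Lemma 1 of the paper (Euclidean model): for a branched disc `f` of order `N` at `0`
there are `δ ∈ (0,1)` and `ε₀ > 0` such that for every `ε ∈ (0, ε₀)` there is a `2π`-periodic
`C¹` function `r_ε : ℝ → (0, δ]` with: for all `θ` and `r ∈ (0, δ]`,
`‖f (r e^{iθ})‖ = ε ↔ r = r_ε θ`; consequently the part of the image of the punctured disc
`{0 < |z| ≤ δ}` lying on the sphere of radius `ε` is exactly the closed curve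
`θ ↦ f (r_ε(θ) e^{iθ})`. -/
theorem branchedDisc_sphere_intersection
    (f : ℂ → EuclideanSpace ℝ (Fin 4)) (N : ℕ) (hf : IsBranchedDisc f N) :
    ∃ δ : ℝ, 0 < δ ∧ δ < 1 ∧ ∃ ε₀ : ℝ, 0 < ε₀ ∧
      ∀ ε : ℝ, 0 < ε → ε < ε₀ →
        ∃ rε : ℝ → ℝ,
          (∀ θ : ℝ, rε θ ∈ Set.Ioc 0 δ) ∧
          Function.Periodic rε (2 * Real.pi) ∧
          ContDiff ℝ 1 rε ∧
          (∀ θ : ℝ, ∀ r : ℝ, r ∈ Set.Ioc 0 δ →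
            (‖f ((r : ℂ) * Complex.exp (θ * Complex.I))‖ = ε ↔ r = rε θ)) ∧
          (f '' {z : ℂ | 0 < ‖z‖ ∧ ‖z‖ ≤ δ}) ∩ Metric.sphere (0 : EuclideanSpace ℝ (Fin 4)) ε
            = Set.range (fun θ : ℝ => f ((rε θ : ℂ) * Complex.exp (θ * Complex.I))) := by
  exact branchedDisc_sphere_intersection_general one_ne_zero hf.map_zero
    hf.contDiffAt_zero.continuousAt
    ((hf.contDiffAt_zero.eventually (by simp)).filter_mono nhdsWithin_le_nhds)
    hf.eventually_inner_fderiv_apply_self_pos
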